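/- arXiv:1103.0800 — 5 statements merged into one kernel-verified Lean document; each statement's English description precedes it below -/
import Mathlib

section
/- Let P, R : ℝ → ℝ, let L > 0, tp ∈ ℝ, and ΔP, ΔR ∈ ℝ with ΔR > 0. Suppose P(t + L) = P(t) + ΔP and R(t + L) = R(t) + ΔR for all t ≥ tp, and suppose P and R are bounded above and below on the interval [tp, tp + L]. Then P(t)/R(t) tends to ΔP/ΔR as t → ∞. -/
open Filter

/-!
Subtracting the linear drift `(t / L) • Δ` from an additively `L`-periodic function with increment
`Δ` leaves an `L`-periodic function, which is bounded because it is bounded on one window. Dividing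
by `t` kills this bounded remainder, so the function grows at the rate `L⁻¹ • Δ`, and the quotient
of two such functions tends to the quotient of their rates, in which the period cancels.
-/

open Bornology Set
open scoped Topology

theorem exists_nat_sub_nsmul_mem_Ico {G : Type*} [AddCommGroup G] [LinearOrder G]
    [IsOrderedAddMonoid G] [Archimedean G] {a p t : G} (hp : 0 < p) (ht : a ≤ t) :
    ∃ n : ℕ, t - n • p ∈ Ico a (a + p) := by
  obtain ⟨m, hm, -⟩ := existsUnique_sub_zsmul_mem_Ico hp t a
  have neg_m_lt_one : -m < 1 := by
    rw [← zsmul_lt_zsmul_iff_left hp, one_zsmul, neg_zsmul]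
    have : a + -(m • p) < a + p := calc
      a + -(m • p) ≤ t + -(m • p) := by gcongr
      _ = t - m • p := (sub_eq_add_neg _ _).symm
      _ < a + p := hm.2
    exact lt_of_add_lt_add_left this
  lift m to ℕ using by lia
  exact ⟨m, by simpa only [natCast_zsmul] using hm⟩

/-- `f` is additively `p`-periodic with increment `d` from time `a` on. Increment `0` is
eventual periodicity in the usual sense. Unlike `AddConstMap`, nothing is required before `a`. -/
def IsAddPeriodicFrom {G E : Type*} [Add G] [LE G] [Add E] (f : G → E) (a p : G) (d : E) : Prop :=
  ∀ t, a ≤ t → f (t + p) = f t + d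

namespace IsAddPeriodicFrom

theorem sub {G E : Type*} [Add G] [LE G] [AddCommGroup E] {f g : G → E} {a p : G} {d e : E}
    (hf : IsAddPeriodicFrom f a p d) (hg : IsAddPeriodicFrom g a p e) :
    IsAddPeriodicFrom (fun t ↦ f t - g t) a p (d - e) := fun t ht ↦ by
  simp only [hf t ht, hg t ht, add_sub_add_comm]

theorem apply_add_nsmul {G E : Type*} [AddMonoid G] [Preorder G] [AddLeftMono G] [AddMonoid E]
    {f : G → E} {a p t : G} {d : E} (hf : IsAddPeriodicFrom f a p d) (hp : 0 ≤ p) (ht : a ≤ t)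
    (n : ℕ) : f (t + n • p) = f t + n • d := by
  induction n with
  | zero => simp only [zero_nsmul, add_zero]
  | succ n ih =>
    have le_add : a ≤ t + n • p := ht.trans (le_add_of_nonneg_right (nsmul_nonneg hp n))
    rw [succ_nsmul, ← add_assoc, hf _ le_add, ih, succ_nsmul, add_assoc]

theorem image_Icc {G E : Type*} [AddCommGroup G] [LinearOrder G] [IsOrderedAddMonoid G]
    [Archimedean G] [AddMonoid E] {f : G → E} {a p : G} (hf : IsAddPeriodicFrom f a p 0)
    (hp : 0 < p) : f '' Icc a (a + p) = f '' Ici a := by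
  refine (image_mono Icc_subset_Ici_self).antisymm ?_
  rintro _ ⟨t, ht, rfl⟩
  obtain ⟨n, hn⟩ := exists_nat_sub_nsmul_mem_Ico hp ht
  refine ⟨t - n • p, Ico_subset_Icc_self hn, ?_⟩
  simpa only [sub_add_cancel, nsmul_zero, add_zero] using
    (hf.apply_add_nsmul hp.le hn.1 n).symm

end IsAddPeriodicFrom

theorem isAddPeriodicFrom_div_smul {𝕜 E : Type*} [DivisionRing 𝕜] [LE 𝕜] [AddCommGroup E]
    [Module 𝕜 E] {p : 𝕜} (hp : p ≠ 0) (a : 𝕜) (d : E) :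
    IsAddPeriodicFrom (fun t ↦ (t / p) • d) a p d :=
  fun t _ ↦ by simp only [add_div, div_self hp, add_smul, one_smul]

namespace IsAddPeriodicFrom

variable {E : Type*} [NormedAddCommGroup E] [NormedSpace ℝ E] {f : ℝ → E} {a p : ℝ} {d : E}

theorem isBounded_image_sub_div_smul (hf : IsAddPeriodicFrom f a p d) (hp : 0 < p)
    (hb : IsBounded (f '' Icc a (a + p))) :
    IsBounded ((fun t ↦ f t - (t / p) • d) '' Ici a) := by
  have periodic : IsAddPeriodicFrom (fun t ↦ f t - (t / p) • d) a p 0 := by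
    simpa only [sub_self] using hf.sub (isAddPeriodicFrom_div_smul hp.ne' a d)
  have drift_bounded : IsBounded ((fun t : ℝ ↦ (t / p) • d) '' Icc a (a + p)) :=
    (isCompact_Icc.image (by fun_prop)).isBounded
  rw [← periodic.image_Icc hp]
  refine (hb.sub drift_bounded).subset ?_
  rintro _ ⟨t, ht, rfl⟩
  exact sub_mem_sub (mem_image_of_mem f ht) (mem_image_of_mem _ ht)

theorem tendsto_inv_smul (hf : IsAddPeriodicFrom f a p d) (hp : 0 < p)
    (hb : IsBounded (f '' Icc a (a + p))) :
    Tendsto (fun t ↦ t⁻¹ • f t) atTop (𝓝 (p⁻¹ • d)) := by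
  obtain ⟨C, hC⟩ := (hf.isBounded_image_sub_div_smul hp hb).exists_norm_le
  have remainder_bounded :
      IsBoundedUnder (· ≤ ·) atTop (norm ∘ fun t ↦ f t - (t / p) • d) :=
    isBoundedUnder_of_eventually_le <| (eventually_ge_atTop a).mono
      fun t ht ↦ hC _ (mem_image_of_mem _ ht)
  have remainder_rate : Tendsto (fun t ↦ t⁻¹ • (f t - (t / p) • d)) atTop (𝓝 0) :=
    tendsto_inv_atTop_zero.zero_smul_isBoundedUnder_le remainder_bounded
  have rate_add : Tendsto (fun t ↦ t⁻¹ • (f t - (t / p) • d) + p⁻¹ • d) atTop (𝓝 (p⁻¹ • d)) := by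
    simpa only [zero_add] using remainder_rate.add_const (p⁻¹ • d)
  refine rate_add.congr' ?_
  filter_upwards [eventually_ne_atTop 0] with t ht
  rw [smul_sub, smul_smul, div_eq_mul_inv, inv_mul_cancel_left₀ ht, sub_add_cancel]

end IsAddPeriodicFrom

theorem longRunCost_eq_periodCost_general {E : Type*} [NormedAddCommGroup E] [NormedSpace ℝ E]
    {P : ℝ → E} {R : ℝ → ℝ} {L tp ΔR : ℝ} {ΔP : E} (hL : 0 < L) (hΔR : ΔR ≠ 0)
    (hP : IsAddPeriodicFrom P tp L ΔP) (hR : IsAddPeriodicFrom R tp L ΔR)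
    (hPb : IsBounded (P '' Icc tp (tp + L))) (hRb : IsBounded (R '' Icc tp (tp + L))) :
    Tendsto (fun t ↦ (R t)⁻¹ • P t) atTop (𝓝 (ΔR⁻¹ • ΔP)) := by
  have cancel {c : ℝ} (hc : c ≠ 0) (r : ℝ) (x : E) : (c⁻¹ • r)⁻¹ • c⁻¹ • x = r⁻¹ • x := by
    rw [smul_eq_mul, mul_inv_rev, smul_smul, inv_inv, mul_inv_cancel_right₀ hc]
  have rate_ne_zero : L⁻¹ • ΔR ≠ 0 := smul_ne_zero (inv_ne_zero hL.ne') hΔR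
  have ratio_of_rates :=
    ((hR.tendsto_inv_smul hL hRb).inv₀ rate_ne_zero).smul (hP.tendsto_inv_smul hL hPb)
  rw [cancel hL.ne'] at ratio_of_rates
  exact ratio_of_rates.congr' <| (eventually_ne_atTop 0).mono fun t ht ↦ cancel ht (R t) (P t)

/-- Theorem 1 (single penalty/reward pair): if the accumulated penalty `P` and reward `R`
are eventually additively `L`-periodic with increments `ΔP` and `ΔR > 0`, and are bounded
on one period window `[tp, tp + L]`, then the long-run cost `P t / R t` converges to the
per-period cost `ΔP / ΔR`. -/
theorem longRunCost_eq_periodCost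
    (P R : ℝ → ℝ) (L tp ΔP ΔR : ℝ) (hL : 0 < L) (hΔR : 0 < ΔR)
    (hPper : ∀ t, tp ≤ t → P (t + L) = P t + ΔP)
    (hRper : ∀ t, tp ≤ t → R (t + L) = R t + ΔR)
    (hPba : BddAbove (P '' Set.Icc tp (tp + L)))
    (hPbb : BddBelow (P '' Set.Icc tp (tp + L)))
    (hRba : BddAbove (R '' Set.Icc tp (tp + L)))
    (hRbb : BddBelow (R '' Set.Icc tp (tp + L))) :
    Tendsto (fun t => P t / R t) atTop (nhds (ΔP / ΔR)) := by
  simpa only [smul_eq_mul, inv_mul_eq_div] using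
    longRunCost_eq_periodCost_general hL hΔR.ne' hPper hRper
      (isBounded_iff_bddBelow_bddAbove.2 ⟨hPbb, hPba⟩)
      (isBounded_iff_bddBelow_bddAbove.2 ⟨hRbb, hRba⟩)
end

section
/- Let m be a natural number and for each i ∈ Fin m let P_i, R_i : ℝ → ℝ, ΔP_i, ΔR_i ∈ ℝ with ΔR_i > 0, and let L > 0, tp ∈ ℝ. Suppose for each i that P_i(t + L) = P_i(t) + ΔP_i and R_i(t + L) = R_i(t) + ΔR_i for all t ≥ tp, and that P_i and R_i are bounded above and below on [tp, tp + L]. Then the function t ↦ ∑_{i} P_i(t)/R_i(t) tends to ∑_{i} ΔP_i/ΔR_i as t → ∞. -/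
open Filter

/-!
Subtracting the linear drift `(t / L) • Δ` from an eventually additively `L`-periodic function
leaves an eventually `L`-periodic one, which takes all its values from `tp` on inside a single
window and is therefore bounded. Hence `f t / t → Δ / L`, and in the ratio of a penalty to a reward
both the time `t` and the period `L` cancel.
-/

/-- `f` is eventually additively `L`-periodic with increment `Δ` from time `tp`. Values in an
arbitrary additive structure are allowed; ordinary eventual periodicity is the case `Δ = 0`. -/
def EventuallyAddPeriodic {E : Type*} [Add E] (f : ℝ → E) (L : ℝ) (Δ : E) (tp : ℝ) : Prop :=
  ∀ t, tp ≤ t → f (t + L) = f t + Δ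

namespace EventuallyAddPeriodic

variable {E : Type*} {L tp : ℝ}

lemma apply_add_nat_mul [AddMonoid E] {f : ℝ → E} {Δ : E} (hf : EventuallyAddPeriodic f L Δ tp)
    (hL : 0 ≤ L) {t : ℝ} (ht : tp ≤ t) (n : ℕ) : f (t + n * L) = f t + n • Δ := by
  induction n with
  | zero => simp
  | succ n ih =>
    have hn : tp ≤ t + n * L := le_add_of_le_of_nonneg ht (by positivity)
    calc f (t + (n + 1 : ℕ) * L) = f (t + n * L + L) := by push_cast; ring_nf
      _ = f t + (n + 1) • Δ := by rw [hf _ hn, ih, succ_nsmul, add_assoc]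

lemma image_Ici_eq_image_Icc [AddMonoid E] {f : ℝ → E} (hf : EventuallyAddPeriodic f L 0 tp)
    (hL : 0 < L) : f '' Set.Ici tp = f '' Set.Icc tp (tp + L) := by
  refine Set.Subset.antisymm ?_ (Set.image_mono Set.Icc_subset_Ici_self)
  rintro _ ⟨t, ht, rfl⟩
  set n := ⌊(t - tp) / L⌋₊
  have hn_le : n * L ≤ t - tp :=
    (le_div_iff₀ hL).1 (Nat.floor_le (div_nonneg (sub_nonneg.2 ht) hL.le))
  have hn_lt : t - tp < (n + 1) * L := (div_lt_iff₀ hL).1 (Nat.lt_floor_add_one _)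
  have hmem : t - n * L ∈ Set.Icc tp (tp + L) := ⟨by linarith, by linarith⟩
  refine ⟨t - n * L, hmem, ?_⟩
  calc f (t - n * L) = f (t - n * L) + n • 0 := by rw [nsmul_zero, add_zero]
    _ = f (t - n * L + n * L) := (hf.apply_add_nat_mul hL.le hmem.1 n).symm
    _ = f t := by rw [sub_add_cancel]

lemma sub_div_smul [AddCommGroup E] [Module ℝ E] {f : ℝ → E} {Δ : E}
    (hf : EventuallyAddPeriodic f L Δ tp) (hL : L ≠ 0) :
    EventuallyAddPeriodic (fun t => f t - (t / L) • Δ) L 0 tp := by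
  intro t ht
  beta_reduce
  rw [hf t ht, add_div, div_self hL, add_smul, one_smul]
  abel

section NormedSpace

variable [NormedAddCommGroup E] [NormedSpace ℝ E] {f : ℝ → E} {Δ : E}

lemma isBounded_image_sub_div_smul (hf : EventuallyAddPeriodic f L Δ tp) (hL : 0 < L)
    (hbdd : Bornology.IsBounded (f '' Set.Icc tp (tp + L))) :
    Bornology.IsBounded ((fun t => f t - (t / L) • Δ) '' Set.Ici tp) := by
  have hdrift : Bornology.IsBounded ((fun t : ℝ => (t / L) • Δ) '' Set.Icc tp (tp + L)) :=
    (isCompact_Icc.image (by fun_prop)).isBounded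
  rw [(hf.sub_div_smul hL.ne').image_Ici_eq_image_Icc hL]
  refine (hbdd.sub hdrift).subset ?_
  rintro _ ⟨t, ht, rfl⟩
  exact Set.sub_mem_sub (Set.mem_image_of_mem f ht) (Set.mem_image_of_mem _ ht)

lemma tendsto_inv_smul_atTop (hf : EventuallyAddPeriodic f L Δ tp) (hL : 0 < L)
    (hbdd : Bornology.IsBounded (f '' Set.Icc tp (tp + L))) :
    Tendsto (fun t => t⁻¹ • f t) atTop (nhds (L⁻¹ • Δ)) := by
  obtain ⟨C, hC⟩ := (hf.isBounded_image_sub_div_smul hL hbdd).exists_norm_le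
  have hdev : IsBoundedUnder (· ≤ ·) atTop fun t => ‖f t - (t / L) • Δ‖ :=
    isBoundedUnder_of_eventually_le <| (eventually_ge_atTop tp).mono fun t ht =>
      hC _ (Set.mem_image_of_mem _ ht)
  have hlim : Tendsto (fun t => t⁻¹ • (f t - (t / L) • Δ) + L⁻¹ • Δ) atTop (nhds (L⁻¹ • Δ)) := by
    simpa only [zero_add] using
      (tendsto_inv_atTop_zero.zero_smul_isBoundedUnder_le hdev).add_const (L⁻¹ • Δ)
  refine hlim.congr' ?_
  filter_upwards [eventually_ne_atTop 0] with t ht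
  rw [smul_sub, smul_smul, div_eq_mul_inv, inv_mul_cancel_left₀ ht, sub_add_cancel]

end NormedSpace

lemma tendsto_div_atTop {𝕜 : Type*} [NormedDivisionRing 𝕜] [NormedAlgebra ℝ 𝕜] {p r : ℝ → 𝕜}
    {Δp Δr : 𝕜} {tp tr : ℝ} (hp : EventuallyAddPeriodic p L Δp tp)
    (hr : EventuallyAddPeriodic r L Δr tr) (hL : 0 < L) (hΔr : Δr ≠ 0)
    (hp_bdd : Bornology.IsBounded (p '' Set.Icc tp (tp + L)))
    (hr_bdd : Bornology.IsBounded (r '' Set.Icc tr (tr + L))) :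
    Tendsto (fun t => p t / r t) atTop (nhds (Δp / Δr)) := by
  have cancel {c : ℝ} (hc : c ≠ 0) (a b : 𝕜) : c⁻¹ • a / c⁻¹ • b = a / b := by
    rw [div_eq_mul_inv, smul_inv₀, inv_inv, smul_mul_smul_comm, inv_mul_cancel₀ hc, one_smul,
      div_eq_mul_inv]
  have hlim := (hp.tendsto_inv_smul_atTop hL hp_bdd).div (hr.tendsto_inv_smul_atTop hL hr_bdd)
    (smul_ne_zero (inv_ne_zero hL.ne') hΔr)
  rw [cancel hL.ne'] at hlim
  refine hlim.congr' ?_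
  filter_upwards [eventually_ne_atTop 0] with t ht using cancel ht _ _

end EventuallyAddPeriodic

theorem longRunCost_sum_eq_periodCost_general {ι 𝕜 : Type*} [NormedDivisionRing 𝕜]
    [NormedAlgebra ℝ 𝕜] (s : Finset ι) {P R : ι → ℝ → 𝕜} {ΔP ΔR : ι → 𝕜} {L tp : ι → ℝ}
    (hL : ∀ i ∈ s, 0 < L i) (hΔR : ∀ i ∈ s, ΔR i ≠ 0)
    (hP : ∀ i ∈ s, EventuallyAddPeriodic (P i) (L i) (ΔP i) (tp i))
    (hR : ∀ i ∈ s, EventuallyAddPeriodic (R i) (L i) (ΔR i) (tp i))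
    (hP_bdd : ∀ i ∈ s, Bornology.IsBounded (P i '' Set.Icc (tp i) (tp i + L i)))
    (hR_bdd : ∀ i ∈ s, Bornology.IsBounded (R i '' Set.Icc (tp i) (tp i + L i))) :
    Tendsto (fun t => ∑ i ∈ s, P i t / R i t) atTop (nhds (∑ i ∈ s, ΔP i / ΔR i)) :=
  tendsto_finsetSum s fun i hi =>
    (hP i hi).tendsto_div_atTop (hR i hi) (hL i hi) (hΔR i hi) (hP_bdd i hi) (hR_bdd i hi)

/-- Theorem 1 of the paper: for a trajectory whose accumulated penalties `P i` and
rewards `R i` are eventually additively `L`-periodic with increments `ΔP i` and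
`ΔR i > 0`, and bounded on one period window, the long-run cost
`∑ i, P i t / R i t` converges to the cost `∑ i, ΔP i / ΔR i` of the repetitive segment. -/
theorem longRunCost_sum_eq_periodCost
    (m : ℕ) (P R : Fin m → ℝ → ℝ) (ΔP ΔR : Fin m → ℝ) (L tp : ℝ)
    (hL : 0 < L) (hΔR : ∀ i, 0 < ΔR i)
    (hPper : ∀ i, ∀ t, tp ≤ t → P i (t + L) = P i t + ΔP i)
    (hRper : ∀ i, ∀ t, tp ≤ t → R i (t + L) = R i t + ΔR i)
    (hPba : ∀ i, BddAbove (P i '' Set.Icc tp (tp + L)))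
    (hPbb : ∀ i, BddBelow (P i '' Set.Icc tp (tp + L)))
    (hRba : ∀ i, BddAbove (R i '' Set.Icc tp (tp + L)))
    (hRbb : ∀ i, BddBelow (R i '' Set.Icc tp (tp + L))) :
    Tendsto (fun t => ∑ i, P i t / R i t) atTop (nhds (∑ i, ΔP i / ΔR i)) := by
  exact longRunCost_sum_eq_periodCost_general Finset.univ (fun _ _ => hL)
    (fun i _ => (hΔR i).ne') (fun i _ => hPper i) (fun i _ => hRper i)
    (fun i _ => isBounded_iff_bddBelow_bddAbove.2 ⟨hPbb i, hPba i⟩)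
    (fun i _ => isBounded_iff_bddBelow_bddAbove.2 ⟨hRbb i, hRba i⟩)
end

section
/- Let E be a real inner product space, ι an index type, x : ι → E and y : ι → ℝ with y i = 1 or y i = −1 for all i. Suppose there exist θ* ∈ E with ‖θ*‖ = 1 and γ > 0 such that y i · ⟪θ*, x i⟫ ≥ γ for all i, and there is ρ > 0 with ‖x i‖ ≤ ρ for all i. Let T be a natural number and θ : ℕ → E satisfy θ 0 = 0 and, for each t < T, there is an index i_t with y(i_t) · ⟪θ t, x(i_t)⟫ ≤ 0 and θ(t+1) = θ t + y(i_t) • x(i_t). Then T ≤ ρ²/γ². -/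
open scoped RealInnerProductSpace

/-!
Each update raises the inner product of the weights with the separator `w` by at least `γ`, so it
grows linearly in the number `T` of updates. On the other hand an update is made along a vector at
a non-acute angle to the weights, so it adds at most `ρ ^ 2` to their squared norm, and the norm
grows only like `√T`. By the Cauchy–Schwarz inequality the first growth cannot outrun the second:
`T * γ ≤ ‖w‖ * √T * ρ`.
-/

section

variable {E ι : Type*} [SeminormedAddCommGroup E] [InnerProductSpace ℝ E]

theorem norm_add_sq_le_of_real_inner_nonpos {a b : E} (h : ⟪a, b⟫ ≤ 0) :
    ‖a + b‖ ^ 2 ≤ ‖a‖ ^ 2 + ‖b‖ ^ 2 := by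
  rw [norm_add_sq_real]
  linarith

/-- The weights `θ 0, …, θ T` arise from `T` consecutive perceptron updates on the samples `z i`.
The labels are absorbed into the samples: `z i` stands for `y i • x i`, so that `z i` is
misclassified by the weights `θ t` when `⟪θ t, z i⟫ ≤ 0`. -/
def IsPerceptronRun (z : ι → E) (θ : ℕ → E) (T : ℕ) : Prop :=
  ∀ t < T, ∃ i, ⟪θ t, z i⟫ ≤ 0 ∧ θ (t + 1) = θ t + z i

namespace IsPerceptronRun

variable {z : ι → E} {θ : ℕ → E} {T : ℕ}

theorem mul_le_inner_sub_inner (h : IsPerceptronRun z θ T) {w : E} {γ : ℝ}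
    (hmargin : ∀ i, γ ≤ ⟪w, z i⟫) : T * γ ≤ ⟪w, θ T⟫ - ⟪w, θ 0⟫ := by
  have hincrement : ∀ t < T, γ ≤ ⟪w, θ (t + 1)⟫ - ⟪w, θ t⟫ := by
    intro t ht
    obtain ⟨i, -, hupdate⟩ := h t ht
    rw [hupdate, inner_add_right, add_sub_cancel_left]
    exact hmargin i
  calc
    T * γ = ∑ _t ∈ Finset.range T, γ := by simp
    _ ≤ ∑ t ∈ Finset.range T, (⟪w, θ (t + 1)⟫ - ⟪w, θ t⟫) :=
      Finset.sum_le_sum fun t ht ↦ hincrement t (Finset.mem_range.mp ht)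
    _ = ⟪w, θ T⟫ - ⟪w, θ 0⟫ := Finset.sum_range_sub (fun t ↦ ⟪w, θ t⟫) T

theorem norm_sq_sub_norm_sq_le (h : IsPerceptronRun z θ T) {ρ : ℝ} (hnorm : ∀ i, ‖z i‖ ≤ ρ) :
    ‖θ T‖ ^ 2 - ‖θ 0‖ ^ 2 ≤ T * ρ ^ 2 := by
  have hincrement : ∀ t < T, ‖θ (t + 1)‖ ^ 2 - ‖θ t‖ ^ 2 ≤ ρ ^ 2 := by
    intro t ht
    obtain ⟨i, hmisclassified, hupdate⟩ := h t ht
    rw [hupdate, sub_le_iff_le_add']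
    calc
      ‖θ t + z i‖ ^ 2 ≤ ‖θ t‖ ^ 2 + ‖z i‖ ^ 2 :=
        norm_add_sq_le_of_real_inner_nonpos hmisclassified
      _ ≤ ‖θ t‖ ^ 2 + ρ ^ 2 := by gcongr; exact hnorm i
  calc
    ‖θ T‖ ^ 2 - ‖θ 0‖ ^ 2 = ∑ t ∈ Finset.range T, (‖θ (t + 1)‖ ^ 2 - ‖θ t‖ ^ 2) :=
      (Finset.sum_range_sub (fun t ↦ ‖θ t‖ ^ 2) T).symm
    _ ≤ ∑ _t ∈ Finset.range T, ρ ^ 2 :=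
      Finset.sum_le_sum fun t ht ↦ hincrement t (Finset.mem_range.mp ht)
    _ = T * ρ ^ 2 := by simp

end IsPerceptronRun

theorem perceptron_convergence_general {z : ι → E} {θ : ℕ → E} {T : ℕ}
    (h : IsPerceptronRun z θ T) (hθ0 : θ 0 = 0) {w : E} {γ : ℝ} (hγ : 0 < γ)
    (hmargin : ∀ i, γ ≤ ⟪w, z i⟫) {ρ : ℝ} (hnorm : ∀ i, ‖z i‖ ≤ ρ) :
    (T : ℝ) ≤ (‖w‖ * ρ) ^ 2 / γ ^ 2 := by
  have hinner : T * γ ≤ ⟪w, θ T⟫ := by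
    simpa [hθ0] using h.mul_le_inner_sub_inner hmargin
  have hnormsq : ‖θ T‖ ^ 2 ≤ T * ρ ^ 2 := by
    simpa [hθ0] using h.norm_sq_sub_norm_sq_le hnorm
  have hquadratic : T * (T * γ ^ 2) ≤ T * (‖w‖ * ρ) ^ 2 := by
    calc
      T * (T * γ ^ 2) = (T * γ) ^ 2 := by ring
      _ ≤ (‖w‖ * ‖θ T‖) ^ 2 := by
        gcongr ?_ ^ 2
        exact hinner.trans (real_inner_le_norm w (θ T))
      _ = ‖w‖ ^ 2 * ‖θ T‖ ^ 2 := mul_pow _ _ _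
      _ ≤ ‖w‖ ^ 2 * (T * ρ ^ 2) := by gcongr
      _ = T * (‖w‖ * ρ) ^ 2 := by ring
  rw [le_div_iff₀ (by positivity)]
  rcases T.eq_zero_or_pos with rfl | hT
  · simpa only [Nat.cast_zero, zero_mul] using sq_nonneg (‖w‖ * ρ)
  · exact le_of_mul_le_mul_left hquadratic (Nat.cast_pos.mpr hT)

end

/-- Novikoff's perceptron convergence bound: if labeled samples `(x i, y i)` are linearly
separable with margin `γ` by a unit vector `θstar` and all samples have norm at most `ρ`,
then the perceptron algorithm (starting from `0` and updating `θ ← θ + y i • x i` on a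
misclassified sample) performs at most `ρ²/γ²` update steps. -/
theorem perceptron_convergence
    {E : Type*} [NormedAddCommGroup E] [InnerProductSpace ℝ E]
    {ι : Type*} (x : ι → E) (y : ι → ℝ)
    (hy : ∀ i, y i = 1 ∨ y i = -1)
    (θstar : E) (hθstar : ‖θstar‖ = 1)
    (γ : ℝ) (hγ : 0 < γ) (hmargin : ∀ i, γ ≤ y i * ⟪θstar, x i⟫)
    (ρ : ℝ) (hρ : 0 < ρ) (hnorm : ∀ i, ‖x i‖ ≤ ρ)
    (T : ℕ) (θ : ℕ → E) (hθ0 : θ 0 = 0)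
    (hstep : ∀ t < T, ∃ i, y i * ⟪θ t, x i⟫ ≤ 0 ∧ θ (t + 1) = θ t + y i • x i) :
    (T : ℝ) ≤ ρ ^ 2 / γ ^ 2 := by
  have hnorm_smul (i : ι) : ‖y i • x i‖ ≤ ρ := by
    rcases hy i with h | h <;> simpa [h] using hnorm i
  simp only [← real_inner_smul_right] at hmargin hstep
  simpa only [hθstar, one_mul] using
    perceptron_convergence_general hstep hθ0 hγ hmargin hnorm_smul
end

section
/- Let n be a natural number and let p : Fin (n+1) → EuclideanSpace ℝ (Fin n) be an affinely independent family of points. Then for every subset S of Fin (n+1) there exist w ∈ EuclideanSpace ℝ (Fin n) and b ∈ ℝ such that for all i, ⟪w, p i⟫ + b ≥ 0 if and only if i ∈ S. -/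
open scoped RealInnerProductSpace

/-!
The differences of an affinely independent family from one of its points are linearly independent,
so a linear functional on their finite-dimensional span takes prescribed values on them, and Riesz
representation on that span turns it into a vector `w`. Hence some affine function `⟪w, ·⟫ + b` is
`1` on the points indexed by `S` and `-1` on the others.
-/

section Interpolation

variable {𝕜 E ι : Type*} [RCLike 𝕜] [NormedAddCommGroup E] [InnerProductSpace 𝕜 E] [Finite ι]

theorem exists_inner_eq_of_linearIndependent {v : ι → E} (hv : LinearIndependent 𝕜 v)
    (c : ι → 𝕜) : ∃ w : E, ∀ i, inner 𝕜 w (v i) = c i := by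
  let B := Module.Basis.span hv
  have : FiniteDimensional 𝕜 (Submodule.span 𝕜 (Set.range v)) := .of_basis B
  let φ := LinearMap.toContinuousLinearMap (B.constr 𝕜 c)
  let w := (InnerProductSpace.toDual 𝕜 (Submodule.span 𝕜 (Set.range v))).symm φ
  refine ⟨w, fun i => ?_⟩
  calc
    inner 𝕜 (w : E) (v i) = inner 𝕜 w (B i) := by rw [Submodule.coe_inner, Module.Basis.span_apply]
    _ = φ (B i) := InnerProductSpace.toDual_symm_apply
    _ = c i := B.constr_basis 𝕜 c i

theorem exists_inner_add_eq_of_affineIndependent {p : ι → E} (hp : AffineIndependent 𝕜 p)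
    (c : ι → 𝕜) : ∃ (w : E) (b : 𝕜), ∀ i, inner 𝕜 w (p i) + b = c i := by
  rcases isEmpty_or_nonempty ι with _ | ⟨⟨i₀⟩⟩
  · exact ⟨0, 0, isEmptyElim⟩
  have hv := (affineIndependent_iff_linearIndependent_vsub 𝕜 p i₀).mp hp
  obtain ⟨w, hw⟩ := exists_inner_eq_of_linearIndependent hv fun i => c i - c i₀
  refine ⟨w, c i₀ - inner 𝕜 w (p i₀), fun i => ?_⟩
  have hdiff : inner 𝕜 w (p i) - inner 𝕜 w (p i₀) = c i - c i₀ := by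
    by_cases hi : i = i₀
    · rw [hi, sub_self, sub_self]
    · simpa only [vsub_eq_sub, inner_sub_right] using hw ⟨i, hi⟩
  linear_combination hdiff

end Interpolation

theorem halfspaces_shatter_affineIndependent_general {E ι : Type*} [NormedAddCommGroup E]
    [InnerProductSpace ℝ E] [Finite ι] {p : ι → E} (hp : AffineIndependent ℝ p) (S : Set ι) :
    ∃ (w : E) (b : ℝ), ∀ i, 0 ≤ ⟪w, p i⟫ + b ↔ i ∈ S := by
  classical
  obtain ⟨w, b, hwb⟩ :=
    exists_inner_add_eq_of_affineIndependent hp fun i => if i ∈ S then 1 else -1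
  refine ⟨w, b, fun i => ?_⟩
  rw [hwb]
  by_cases hi : i ∈ S <;> simp [hi]

/-- VC-dimension lower bound for halfspaces in `ℝⁿ`: any affinely independent family of
`n + 1` points is shattered by halfspaces `{x | ⟪w, x⟫ + b ≥ 0}`. -/
theorem halfspaces_shatter_affineIndependent
    (n : ℕ) (p : Fin (n + 1) → EuclideanSpace ℝ (Fin n))
    (hp : AffineIndependent ℝ p) :
    ∀ S : Set (Fin (n + 1)), ∃ (w : EuclideanSpace ℝ (Fin n)) (b : ℝ),
      ∀ i, 0 ≤ ⟪w, p i⟫ + b ↔ i ∈ S :=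
  halfspaces_shatter_affineIndependent_general hp
end

section
/- Let n be a natural number and let p : Fin (n+2) → EuclideanSpace ℝ (Fin n) be any family of n + 2 points. Then there exists a subset S of Fin (n+2) such that there are no w ∈ EuclideanSpace ℝ (Fin n) and b ∈ ℝ with the property that for all i, ⟪w, p i⟫ + b ≥ 0 if and only if i ∈ S. -/
open scoped RealInnerProductSpace

/-!
By Radon's theorem, an affinely dependent family splits into two parts whose convex hulls share a
point. A halfspace and its complement are both convex, so a halfspace cutting out exactly one of the
parts would put the shared point both inside and outside itself. Finally, `n + 2` points of an
`n`-dimensional space are always affinely dependent.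
-/

theorem not_affineIndependent_of_finrank_add_one_lt_card {k V P ι : Type*} [DivisionRing k]
    [AddCommGroup V] [Module k V] [FiniteDimensional k V] [AddTorsor V P] [Fintype ι] {p : ι → P}
    (hcard : Module.finrank k V + 1 < Fintype.card ι) : ¬ AffineIndependent k p := fun hp ↦
  hcard.not_ge <| hp.card_le_finrank_succ.trans <|
    Nat.add_le_add_right (Submodule.finrank_le _) 1

section OrderedField

variable {𝕜 E ι : Type*} [Field 𝕜] [LinearOrder 𝕜] [IsStrictOrderedRing 𝕜] [AddCommGroup E]
  [Module 𝕜 E] {p : ι → E}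

theorem exists_forall_convex_preimage_ne (hp : ¬ AffineIndependent 𝕜 p) :
    ∃ S : Set ι, ∀ C : Set E, Convex 𝕜 C → Convex 𝕜 Cᶜ → p ⁻¹' C ≠ S := by
  obtain ⟨S, x, hxS, hxSc⟩ := Convex.radon_partition hp
  refine ⟨S, ?_⟩
  rintro C hC hCc rfl
  have hx_mem : x ∈ C := convexHull_min (Set.image_preimage_subset p C) hC hxS
  have hx_notMem : x ∈ Cᶜ := convexHull_min (Set.image_preimage_subset p Cᶜ) hCc hxSc
  exact hx_notMem hx_mem

theorem halfspaces_not_shatter_general (hp : ¬ AffineIndependent 𝕜 p) :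
    ∃ S : Set ι, ¬ ∃ f : E →ᵃ[𝕜] 𝕜, ∀ i, 0 ≤ f (p i) ↔ i ∈ S := by
  obtain ⟨S, hS⟩ := exists_forall_convex_preimage_ne hp
  refine ⟨S, fun ⟨f, hf⟩ ↦ hS (f ⁻¹' Set.Ici 0) ((convex_Ici 0).affine_preimage f) ?_ (Set.ext hf)⟩
  rw [← Set.preimage_compl, Set.compl_Ici]
  exact (convex_Iio 0).affine_preimage f

end OrderedField

/-- VC-dimension upper bound for halfspaces in `ℝⁿ`: no family of `n + 2` points can be
shattered by halfspaces `{x | ⟪w, x⟫ + b ≥ 0}`. -/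
theorem halfspaces_not_shatter
    (n : ℕ) (p : Fin (n + 2) → EuclideanSpace ℝ (Fin n)) :
    ∃ S : Set (Fin (n + 2)), ¬ ∃ (w : EuclideanSpace ℝ (Fin n)) (b : ℝ),
      ∀ i, 0 ≤ ⟪w, p i⟫ + b ↔ i ∈ S := by
  obtain ⟨S, hS⟩ := halfspaces_not_shatter_general (p := p)
    (not_affineIndependent_of_finrank_add_one_lt_card (k := ℝ) (by simp))
  exact ⟨S, fun ⟨w, b, h⟩ ↦ hS ⟨(innerₗ _ w).toAffineMap + AffineMap.const ℝ _ b, h⟩⟩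
end
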